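/- arXiv:1611.08060 — 2 statements merged into one kernel-verified Lean document; each statement's English description precedes it below -/
import Mathlib

section
/- Let ε ∈ (0,1) and let (A, B, w, (B_i)_{i∈A}) be a (1,ε)-restricted allocation instance. For every real T > 0, if the configuration LP CLP(T) is feasible, then there exists an allocation (S_i)_{i∈A} such that every agent i ∈ A receives value w(S_i) ≥ T/3. In particular, OPT ≥ T/3 whenever CLP(T) is feasible, i.e., the integrality gap of the configuration LP of the (1,ε)-restricted allocation problem is at most 3. -/
open Finset

/-- one augmentation step -/
theorem aux_step {A B : Type*} [Fintype A] [DecidableEq A] [DecidableEq B]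
    (E : A → Finset B → Prop) (y : B → ℕ) (K : ℕ) (hK : 0 < K)
    (h1 : ∀ (a : A) (e : Finset B) (M : A → Finset B) (Q : Finset A), E a e → Q.Nonempty →
      (∀ i ∈ Q, E i (M i) ∧ ¬ Disjoint (M i) e) →
      ∑ j ∈ e ∪ Q.biUnion M, y j ≤ K * Q.card)
    (h2 : ∀ (P : Finset A) (F : Finset B), ∑ j ∈ F, y j < K * P.card →
      ∃ a ∈ P, ∃ e, E a e ∧ Disjoint e F)
    (D : Finset A) (r : A) (hr : r ∉ D)
    (M₀ : A → Finset B) (hM₀ : (∀ i ∈ D, E i (M₀ i)) ∧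
      ∀ i ∈ D, ∀ i' ∈ D, i ≠ i' → Disjoint (M₀ i) (M₀ i')) :
    ∃ M : A → Finset B, (∀ i ∈ insert r D, E i (M i)) ∧
      ∀ i ∈ insert r D, ∀ i' ∈ insert r D, i ≠ i' → Disjoint (M i) (M i') := by
  by_contra hcon
  have key : ∀ n : ℕ, ∃ (C : Set (A → Finset B)) (F : Finset B) (P : Finset A),
      n ≤ P.card ∧ C.Nonempty ∧
      (∀ M ∈ C, (∀ i ∈ D, E i (M i)) ∧ ∀ i ∈ D, ∀ i' ∈ D, i ≠ i' → Disjoint (M i) (M i')) ∧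
      (∑ j ∈ F, y j) + K ≤ K * P.card ∧
      (∀ M ∈ C, ∀ a ∈ P, ∀ e, E a e → Disjoint e F → (∀ i ∈ D, Disjoint (M i) e) → False) ∧
      (∀ M ∈ C, ∀ i ∈ P, i ∈ D → M i ⊆ F) ∧
      (∀ M ∈ C, ∀ a ∈ D, a ∉ P → ∀ e, E a e → Disjoint e F → (∀ i ∈ D, Disjoint (M i) e) →
        Function.update M a e ∈ C) := by
    intro n
    induction n with
    | zero =>
      refine ⟨{M | (∀ i ∈ D, E i (M i)) ∧
        ∀ i ∈ D, ∀ i' ∈ D, i ≠ i' → Disjoint (M i) (M i')}, ∅, {r}, by simp, ⟨M₀, hM₀⟩,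
        fun M h => h, by simp, ?_, ?_, ?_⟩
      · rintro M ⟨hE, hd⟩ a ha e he - hun
        rw [Finset.mem_singleton] at ha
        subst ha
        apply hcon
        have hne : ∀ i ∈ D, i ≠ a := fun i hi h => hr (h ▸ hi)
        refine ⟨Function.update M a e, ?_, ?_⟩
        · intro i hi
          rcases Finset.mem_insert.1 hi with rfl | hi
          · simpa using he
          · rw [Function.update_of_ne (hne i hi)]; exact hE i hi
        · intro i hi i' hi' hii
          rcases Finset.mem_insert.1 hi with h | h
          · rcases Finset.mem_insert.1 hi' with h' | h'
            · exact absurd (h.trans h'.symm) hii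
            · rw [Function.update_of_ne (hne i' h'), h, Function.update_self]
              exact (hun i' h').symm
          · rcases Finset.mem_insert.1 hi' with h' | h'
            · rw [Function.update_of_ne (hne i h), h', Function.update_self]
              exact hun i h
            · rw [Function.update_of_ne (hne i h), Function.update_of_ne (hne i' h')]
              exact hd i h i' h' hii
      · intro M _ i hi hiD
        rw [Finset.mem_singleton] at hi
        exact absurd (hi ▸ hiD) hr
      · rintro M ⟨hE, hd⟩ a haD - e he - hun
        refine ⟨?_, ?_⟩
        · intro i hi
          by_cases h : i = a
          · subst h; simpa using he
          · rw [Function.update_of_ne h]; exact hE i hi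
        · intro i hi i' hi' hii
          by_cases h : i = a
          · subst h
            rw [Function.update_of_ne (Ne.symm hii), Function.update_self]
            exact (hun i' hi').symm
          · by_cases h' : i' = a
            · subst h'
              rw [Function.update_of_ne h, Function.update_self]
              exact hun i hi
            · rw [Function.update_of_ne h, Function.update_of_ne h']
              exact hd i hi i' hi' hii
    | succ n ih =>
      obtain ⟨C, F, P, hn, hC, ha, hb, hc, hd, he⟩ := ih
      obtain ⟨a₀, ha₀, e, hEe, heF⟩ := h2 P F (by omega)
      let Bl : (A → Finset B) → Finset A := fun M => D.filter (fun i => ¬ Disjoint (M i) e)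
      obtain ⟨M1, hM1, hmin⟩ : ∃ M1 ∈ C, ∀ M ∈ C, (Bl M1).card ≤ (Bl M).card := by
        obtain ⟨M1, h, h'⟩ := exists_minimalFor_of_wellFoundedLT (fun M => M ∈ C)
          (fun M => (Bl M).card) hC
        exact ⟨M1, h, fun M hM => by
          by_contra hlt
          push Not at hlt
          exact absurd (h' hM hlt.le) (by simpa using hlt)⟩
      have hmemBl : ∀ M i, i ∈ Bl M ↔ i ∈ D ∧ ¬ Disjoint (M i) e := by
        intro M i; simp [Bl]
      have hQne : (Bl M1).Nonempty := by
        by_contra hQ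
        rw [Finset.not_nonempty_iff_eq_empty] at hQ
        refine hc M1 hM1 a₀ ha₀ e hEe heF ?_
        intro i hi
        by_contra hnd
        have : i ∈ Bl M1 := (hmemBl _ _).2 ⟨hi, hnd⟩
        simp [hQ] at this
      have hdisj : Disjoint P (Bl M1) := by
        rw [Finset.disjoint_left]
        intro i hiP hiB
        obtain ⟨hiD, hnd⟩ := (hmemBl _ _).1 hiB
        exact hnd (Finset.disjoint_of_subset_left (hd M1 hM1 i hiP hiD) heF.symm)
      have hcard : (P ∪ Bl M1).card = P.card + (Bl M1).card := Finset.card_union_of_disjoint hdisj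
      have hQpos := hQne.card_pos
      set F' := F ∪ (e ∪ (Bl M1).biUnion M1) with hF'
      have hFF' : F ⊆ F' := Finset.subset_union_left
      have heF' : e ⊆ F' := Finset.subset_union_left.trans Finset.subset_union_right
      refine ⟨{M | M ∈ C ∧ Bl M = Bl M1 ∧ ∀ i ∈ Bl M1, M i = M1 i}, F',
        P ∪ Bl M1, by omega, ⟨M1, hM1, rfl, fun _ _ => rfl⟩, fun M hM => ha M hM.1, ?_, ?_, ?_, ?_⟩
      · have hu : ∑ j ∈ F', y j ≤ ∑ j ∈ F, y j + ∑ j ∈ e ∪ (Bl M1).biUnion M1, y j := by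
          rw [hF', ← Finset.sum_union_inter]; omega
        have := h1 a₀ e M1 (Bl M1) hEe hQne (fun i hi =>
          ⟨(ha M1 hM1).1 i ((hmemBl _ _).1 hi).1, ((hmemBl _ _).1 hi).2⟩)
        rw [hcard, Nat.mul_add]; omega
      · rintro M ⟨hMC, hBl, hag⟩ a haP e' hEe' he'F hun
        rcases Finset.mem_union.1 haP with haP' | haQ
        · exact hc M hMC a haP' e' hEe' (Finset.disjoint_of_subset_right hFF' he'F) hun
        · have haD := ((hmemBl _ _).1 haQ).1
          have hmem := he M hMC a haD (Finset.disjoint_right.1 hdisj haQ) e' hEe'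
            (Finset.disjoint_of_subset_right hFF' he'F) hun
          have hle := hmin _ hmem
          have hss : Bl (Function.update M a e') ⊂ Bl M1 := by
            rw [Finset.ssubset_iff_of_subset]
            · refine ⟨a, haQ, ?_⟩
              rw [hmemBl, Function.update_self]
              rintro ⟨-, h⟩
              exact h (Finset.disjoint_of_subset_right heF' he'F)
            · intro i hi
              rw [hmemBl] at hi
              by_cases h : i = a
              · rw [h]; exact haQ
              · rw [Function.update_of_ne h, ← hmemBl, hBl] at hi; exact hi
          exact absurd (Finset.card_lt_card hss) (by omega)
      · rintro M ⟨hMC, hBl, hag⟩ i hi hiD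
        rcases Finset.mem_union.1 hi with hi | hi
        · exact (hd M hMC i hi hiD).trans hFF'
        · rw [hag i hi]
          exact (Finset.subset_biUnion_of_mem M1 hi).trans
            (Finset.subset_union_right.trans Finset.subset_union_right)
      · rintro M ⟨hMC, hBl, hag⟩ a haD haP e' hEe' he'F hun
        rw [Finset.mem_union, not_or] at haP
        refine ⟨he M hMC a haD haP.1 e' hEe' (Finset.disjoint_of_subset_right hFF' he'F) hun, ?_, ?_⟩
        · rw [← hBl]
          ext i
          rw [hmemBl, hmemBl]
          by_cases h : i = a
          · subst h
            rw [Function.update_self]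
            have h3 := haP.2
            rw [← hBl, hmemBl] at h3
            have h4 : Disjoint e' e := Finset.disjoint_of_subset_right heF' he'F
            tauto
          · rw [Function.update_of_ne h]
        · intro i hi
          have h : i ≠ a := fun h => haP.2 (h ▸ hi)
          rw [Function.update_of_ne h, hag i hi]
  obtain ⟨C, F, P, hn, -⟩ := key (Fintype.card A + 1)
  have := Finset.card_le_univ P
  omega

theorem aux_match {A B : Type*} [Fintype A] [DecidableEq A] [DecidableEq B]
    (E : A → Finset B → Prop) (y : B → ℕ) (K : ℕ) (hK : 0 < K)
    (h1 : ∀ (a : A) (e : Finset B) (M : A → Finset B) (Q : Finset A), E a e → Q.Nonempty →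
      (∀ i ∈ Q, E i (M i) ∧ ¬ Disjoint (M i) e) →
      ∑ j ∈ e ∪ Q.biUnion M, y j ≤ K * Q.card)
    (h2 : ∀ (P : Finset A) (F : Finset B), ∑ j ∈ F, y j < K * P.card →
      ∃ a ∈ P, ∃ e, E a e ∧ Disjoint e F) :
    ∃ M : A → Finset B, (∀ i, E i (M i)) ∧ ∀ i i', i ≠ i' → Disjoint (M i) (M i') := by
  have : ∀ D : Finset A, ∃ M : A → Finset B, (∀ i ∈ D, E i (M i)) ∧
      ∀ i ∈ D, ∀ i' ∈ D, i ≠ i' → Disjoint (M i) (M i') := by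
    intro D
    induction D using Finset.induction_on with
    | empty => exact ⟨fun _ => ∅, by simp, by simp⟩
    | insert r D hr ih =>
      obtain ⟨M, hM⟩ := ih
      exact aux_step E y K hK h1 h2 D r hr M hM
  obtain ⟨M, hM, hd⟩ := this Finset.univ
  exact ⟨M, fun i => hM i (by simp), fun i i' => hd i (by simp) i' (by simp)⟩

/-- Hall type rounding -/
theorem aux_hall {A B : Type*} [Fintype A] [Fintype B] [DecidableEq A] [DecidableEq B]
    (z : A → B → ℝ) (hz : ∀ i j, 0 ≤ z i j) (hz1 : ∀ j, ∑ i, z i j ≤ 1)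
    (G : Finset B) (n : A → ℕ) (hn : ∀ i, (n i : ℝ) ≤ ∑ j ∈ G, z i j) :
    ∃ R : A → Finset B, (∀ i, ∀ j ∈ R i, j ∈ G ∧ 0 < z i j) ∧ (∀ i, (R i).card = n i) ∧
      ∀ i i', i ≠ i' → Disjoint (R i) (R i') := by
  classical
  let t : (Σ i : A, Fin (n i)) → Finset B := fun p => G.filter (fun j => 0 < z p.1 j)
  have hall : ∀ s : Finset (Σ i : A, Fin (n i)), s.card ≤ (s.biUnion t).card := by
    intro s
    set I := s.image Sigma.fst with hI
    have hs1 : s.card ≤ ∑ i ∈ I, n i := by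
      have : s ⊆ I.sigma (fun i => (Finset.univ : Finset (Fin (n i)))) := by
        intro p hp
        simp only [Finset.mem_sigma, Finset.mem_univ, and_true, hI]
        exact Finset.mem_image_of_mem _ hp
      simpa using Finset.card_le_card this
    have hs2 : ((∑ i ∈ I, n i : ℕ) : ℝ) ≤ (s.biUnion t).card := by
      push_cast
      calc ∑ i ∈ I, (n i : ℝ) ≤ ∑ i ∈ I, ∑ j ∈ s.biUnion t, z i j := by
            refine Finset.sum_le_sum fun i hi => (hn i).trans ?_
            obtain ⟨p, hp, rfl⟩ := Finset.mem_image.1 hi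
            calc ∑ j ∈ G, z p.1 j = ∑ j ∈ t p, z p.1 j := by
                  symm
                  refine Finset.sum_subset (Finset.filter_subset _ _) ?_
                  intro j hj hj'
                  simp only [t, Finset.mem_filter, not_and, not_lt] at hj'
                  exact le_antisymm (hj' hj) (hz _ _)
              _ ≤ _ := Finset.sum_le_sum_of_subset_of_nonneg
                  (Finset.subset_biUnion_of_mem t hp) (fun _ _ _ => hz _ _)
        _ = ∑ j ∈ s.biUnion t, ∑ i ∈ I, z i j := Finset.sum_comm
        _ ≤ ∑ j ∈ s.biUnion t, 1 := by
            refine Finset.sum_le_sum fun j _ => le_trans ?_ (hz1 j)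
            exact Finset.sum_le_sum_of_subset_of_nonneg (Finset.subset_univ _)
              (fun _ _ _ => hz _ _)
        _ = _ := by simp
    exact hs1.trans (by exact_mod_cast hs2)
  obtain ⟨f, hf, hft⟩ := (Finset.all_card_le_biUnion_card_iff_exists_injective t).1 hall
  refine ⟨fun i => Finset.univ.image (fun q : Fin (n i) => f ⟨i, q⟩), ?_, ?_, ?_⟩
  · intro i j hj
    obtain ⟨q, -, rfl⟩ := Finset.mem_image.1 hj
    have := hft ⟨i, q⟩
    simpa [t] using this
  · intro i
    rw [Finset.card_image_of_injective]
    · simp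
    · intro q q' h
      simpa using hf h
  · intro i i' hii
    rw [Finset.disjoint_left]
    intro j hj hj'
    obtain ⟨q, -, rfl⟩ := Finset.mem_image.1 hj
    obtain ⟨q', -, h⟩ := Finset.mem_image.1 hj'
    exact hii (congrArg Sigma.fst (hf h)).symm

/-- **Integrality gap of the configuration LP is at most 3.**
If `CLP(T)` is feasible for a `(1,ε)`-restricted allocation instance (given by a
feasible fractional solution `x` supported on configurations of value `≥ T`),
then there is an allocation giving every agent value at least `T/3`. -/
theorem clp_integrality_gap_le_three
    {A B : Type*} [Fintype A] [Fintype B] [DecidableEq B]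
    (ε : ℝ) (hε : ε ∈ Set.Ioo (0 : ℝ) 1)
    (w : B → ℝ) (hw : ∀ j, w j = 1 ∨ w j = ε)
    (Bi : A → Finset B)
    (T : ℝ) (hT : 0 < T)
    (x : A → Finset B → ℝ)
    (hx0 : ∀ i S, 0 ≤ x i S)
    (hsupp : ∀ i S, 0 < x i S → S ⊆ Bi i ∧ T ≤ ∑ j ∈ S, w j)
    (hcov : ∀ i, 1 ≤ ∑ S : Finset B, x i S)
    (hpack : ∀ j : B,
      ∑ i : A, ∑ S ∈ Finset.univ.filter (fun S : Finset B => j ∈ S), x i S ≤ 1) :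
    ∃ S : A → Finset B,
      (∀ i, S i ⊆ Bi i) ∧
      (∀ i i', i ≠ i' → Disjoint (S i) (S i')) ∧
      (∀ i, T / 3 ≤ ∑ j ∈ S i, w j) := by
  classical
  obtain ⟨hε0, hε1⟩ := hε
  have hswap : ∀ (i : A) (G : Finset B) (v : B → ℝ),
      ∑ j ∈ G, (∑ S ∈ Finset.univ.filter (fun S : Finset B => j ∈ S), x i S) * v j
        = ∑ S : Finset B, x i S * ∑ j ∈ S ∩ G, v j := by
    intro i G v
    simp_rw [Finset.sum_mul, Finset.mul_sum, Finset.sum_filter]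
    rw [Finset.sum_comm]
    refine Finset.sum_congr rfl fun S _ => ?_
    rw [← Finset.sum_filter]
    refine Finset.sum_congr ?_ fun _ _ => rfl
    ext j; simp [and_comm]
  set z : A → B → ℝ := fun i j => ∑ S ∈ Finset.univ.filter (fun S : Finset B => j ∈ S), x i S
    with hzdef
  have hz0 : ∀ i j, 0 ≤ z i j := fun i j => Finset.sum_nonneg fun S _ => hx0 i S
  have hz1 : ∀ j, ∑ i, z i j ≤ 1 := hpack
  have hcovlow : ∀ (i : A) (G : Finset B) (v : B → ℝ) (c : ℝ), 0 ≤ c →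
      (∀ S, 0 < x i S → c ≤ ∑ j ∈ S ∩ G, v j) → c ≤ ∑ j ∈ G, z i j * v j := by
    intro i G v c hc h
    rw [hswap]
    calc c ≤ (∑ S : Finset B, x i S) * c := by nlinarith [hcov i]
      _ = ∑ S : Finset B, x i S * c := Finset.sum_mul _ _ _
      _ ≤ _ := by
        refine Finset.sum_le_sum fun S _ => ?_
        rcases (hx0 i S).eq_or_lt with h0 | h0
        · rw [← h0]; simp
        · exact mul_le_mul_of_nonneg_left (h S h0) h0.le
  by_cases hT3 : T ≤ 3
  · -- local search
    set k := ⌈T / (3 * ε)⌉₊ with hk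
    have hkpos : 0 < k := Nat.ceil_pos.2 (by positivity)
    have hkT : T / 3 ≤ k * ε := by
      have := Nat.le_ceil (T / (3 * ε))
      rw [div_le_iff₀ (by positivity)] at this
      rw [← hk] at this
      linarith
    have hkT' : 3 * ((k : ℝ) - 1) * ε < T := by
      have := Nat.ceil_lt_add_one (a := T / (3 * ε)) (by positivity)
      rw [← hk, ← sub_lt_iff_lt_add, lt_div_iff₀ (by positivity)] at this
      linarith
    let E : A → Finset B → Prop := fun i S => S ⊆ Bi i ∧
      ((∃ h, w h = 1 ∧ S = {h}) ∨ ((∀ j ∈ S, w j = ε) ∧ S.card = k))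
    let y : B → ℕ := fun j => if w j = 1 then 2 * k - 1 else 1
    have hyl : ∀ j, w j = ε → y j = 1 := by
      intro j hj
      have : w j ≠ 1 := by rw [hj]; exact hε1.ne
      simp [y, this]
    have hyh : ∀ j, w j = 1 → y j = 2 * k - 1 := by
      intro j hj; simp [y, hj]
    have hfin : ∃ M : A → Finset B, (∀ i, E i (M i)) ∧
        ∀ i i', i ≠ i' → Disjoint (M i) (M i') := by
      refine aux_match E y (2 * k - 1) (by omega) ?_ ?_
      · intro a e M Q hEe hQ hMQ
        have hQpos := hQ.card_pos
        rcases hEe.2 with ⟨h, hh, he⟩ | ⟨hl, hc⟩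
        · have hall : ∀ i ∈ Q, M i = {h} := by
            intro i hi
            obtain ⟨⟨_, h3⟩, h4⟩ := hMQ i hi
            have h5 : h ∈ M i := by
              rw [he] at h4; simpa using h4
            rcases h3 with ⟨h', hh', h6⟩ | ⟨h6, _⟩
            · rw [h6] at h5 ⊢
              rw [Finset.mem_singleton.1 h5]
            · have := h6 h h5
              linarith
          have : e ∪ Q.biUnion M ⊆ {h} := by
            intro j hj
            rcases Finset.mem_union.1 hj with hj | hj
            · rw [← he]; exact hj
            · obtain ⟨i, hi, hj⟩ := Finset.mem_biUnion.1 hj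
              rw [← hall i hi]; exact hj
          calc _ ≤ ∑ j ∈ ({h} : Finset B), y j := Finset.sum_le_sum_of_subset this
            _ = 2 * k - 1 := by simp [hyh h hh]
            _ ≤ _ := Nat.le_mul_of_pos_right _ hQpos
        · have hall : ∀ i ∈ Q, (∀ j ∈ M i, w j = ε) ∧ (M i).card = k := by
            intro i hi
            obtain ⟨⟨_, h3⟩, h4⟩ := hMQ i hi
            rcases h3 with ⟨h', hh', h6⟩ | h6
            · rw [h6] at h4
              have h5 : h' ∈ e := by simpa using h4
              have := hl h' h5
              linarith
            · exact h6
          have hun : e ∪ Q.biUnion M = e ∪ Q.biUnion (fun i => M i \ e) := by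
            ext j
            simp only [Finset.mem_union, Finset.mem_biUnion, Finset.mem_sdiff]
            by_cases hj : j ∈ e <;> simp [hj]
          have hs : ∑ j ∈ e ∪ Q.biUnion M, y j = (e ∪ Q.biUnion M).card := by
            rw [Finset.card_eq_sum_ones]
            refine Finset.sum_congr rfl fun j hj => hyl j ?_
            rcases Finset.mem_union.1 hj with hj | hj
            · exact hl j hj
            · obtain ⟨i, hi, hj⟩ := Finset.mem_biUnion.1 hj
              exact (hall i hi).1 j hj
          rw [hs, hun]
          have hb : (Q.biUnion (fun i => M i \ e)).card ≤ Q.card * (k - 1) := by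
            refine Finset.card_biUnion_le_card_mul _ _ _ fun i hi => ?_
            have h3 : M i \ e ⊂ M i := by
              refine (Finset.ssubset_iff_of_subset Finset.sdiff_subset).2 ?_
              obtain ⟨j, hj, hj'⟩ := Finset.not_disjoint_iff.1 (hMQ i hi).2
              exact ⟨j, hj, by simp [hj']⟩
            have := Finset.card_lt_card h3
            rw [(hall i hi).2] at this
            omega
          have hcu := Finset.card_union_le e (Q.biUnion (fun i => M i \ e))
          rw [hc] at hcu
          have h7 : (2 * k - 1) * Q.card = k * Q.card + Q.card * (k - 1) := by
            have : 2 * k - 1 = k + (k - 1) := by omega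
            rw [this]; ring
          have h8 : k ≤ k * Q.card := Nat.le_mul_of_pos_right _ hQpos
          omega
      · intro P F hlt
        by_contra hcon
        push Not at hcon
        have hlow : ∀ i ∈ P, ((2 * k - 1 : ℕ) : ℝ) ≤ ∑ j ∈ F, z i j * (y j : ℝ) := by
          intro i hi
          refine hcovlow i F (fun j => (y j : ℝ)) _ (Nat.cast_nonneg _) fun S hS => ?_
          obtain ⟨hSB, hST⟩ := hsupp i S hS
          rw [← Nat.cast_sum, Nat.cast_le]
          by_cases hh : ∃ h ∈ S, w h = 1
          · obtain ⟨h, hhS, hh⟩ := hh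
            have h3 := hcon i hi {h} ⟨by simpa using hSB hhS, Or.inl ⟨h, hh, rfl⟩⟩
            have h4 : h ∈ F := by simpa using h3
            rw [← hyh h hh]
            exact Finset.single_le_sum (f := y) (fun _ _ => Nat.zero_le _)
              (Finset.mem_inter.2 ⟨hhS, h4⟩)
          · push Not at hh
            have hl : ∀ j ∈ S, w j = ε := fun j hj => (hw j).resolve_left (hh j hj)
            have hs : ∑ j ∈ S ∩ F, y j = (S ∩ F).card := by
              rw [Finset.card_eq_sum_ones]
              exact Finset.sum_congr rfl fun j hj => hyl j (hl j (Finset.mem_inter.1 hj).1)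
            rw [hs]
            rw [Finset.sum_congr rfl hl, Finset.sum_const, nsmul_eq_mul] at hST
            have h3 : 3 * ((k : ℝ) - 1) < S.card := by
              by_contra h
              push Not at h
              nlinarith
            have h4 : 3 * k < S.card + 3 := by
              have : (3 * k : ℝ) < S.card + 3 := by linarith
              exact_mod_cast this
            have h5 : (S \ F).card < k := by
              by_contra h
              push Not at h
              obtain ⟨U, hU, hUc⟩ := Finset.exists_subset_card_eq h
              refine hcon i hi U ⟨(hU.trans Finset.sdiff_subset).trans hSB, Or.inr
                ⟨fun j hj => hl j (Finset.sdiff_subset (hU hj)), hUc⟩⟩ ?_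
              exact Finset.disjoint_of_subset_left hU Finset.sdiff_disjoint
            have h6 := Finset.card_inter_add_card_sdiff S F
            omega
        have : ((2 * k - 1 : ℕ) : ℝ) * P.card ≤ ∑ j ∈ F, (y j : ℝ) := by
          calc ((2 * k - 1 : ℕ) : ℝ) * P.card = ∑ i ∈ P, ((2 * k - 1 : ℕ) : ℝ) := by
                rw [Finset.sum_const, nsmul_eq_mul, mul_comm]
            _ ≤ ∑ i ∈ P, ∑ j ∈ F, z i j * (y j : ℝ) := Finset.sum_le_sum hlow
            _ = ∑ j ∈ F, (∑ i ∈ P, z i j) * (y j : ℝ) := by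
                rw [Finset.sum_comm]; simp_rw [Finset.sum_mul]
            _ ≤ ∑ j ∈ F, 1 * (y j : ℝ) := by
                refine Finset.sum_le_sum fun j _ => ?_
                refine mul_le_mul_of_nonneg_right (le_trans ?_ (hz1 j)) (Nat.cast_nonneg _)
                exact Finset.sum_le_sum_of_subset_of_nonneg (Finset.subset_univ _)
                  (fun _ _ _ => hz0 _ _)
            _ = _ := by simp
        have h9 : (2 * k - 1) * P.card ≤ ∑ j ∈ F, y j := by exact_mod_cast this
        omega
    · obtain ⟨M, hM, hd⟩ := hfin
      refine ⟨M, fun i => (hM i).1, hd, fun i => ?_⟩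
      rcases (hM i).2 with ⟨h, hh, hS⟩ | ⟨hl, hc⟩
      · rw [hS]; simp [hh]; linarith
      · rw [Finset.sum_congr rfl hl]; simp [hc]; exact hkT
  · -- rounding
    push Not at hT3
    set H := Finset.univ.filter (fun j : B => w j = 1) with hH
    set L := Finset.univ.filter (fun j : B => ¬ w j = 1) with hL
    have hLw : ∀ j ∈ L, w j = ε := fun j hj => (hw j).resolve_left (by simpa [hL] using hj)
    have hHw : ∀ j ∈ H, w j = 1 := fun j hj => by simpa [hH] using hj
    have hfl : ∀ (G : Finset B) (i : A), ((⌊∑ j ∈ G, z i j⌋₊ : ℕ) : ℝ) ≤ ∑ j ∈ G, z i j :=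
      fun G i => Nat.floor_le (Finset.sum_nonneg fun _ _ => hz0 _ _)
    obtain ⟨R, hR, hRc, hRd⟩ := aux_hall z hz0 hz1 H (fun i => ⌊∑ j ∈ H, z i j⌋₊) (hfl H)
    obtain ⟨R', hR', hRc', hRd'⟩ := aux_hall z hz0 hz1 L (fun i => ⌊∑ j ∈ L, z i j⌋₊) (hfl L)
    have hHL : Disjoint H L := Finset.disjoint_filter_filter_not _ _ _
    have hzB : ∀ i j, 0 < z i j → j ∈ Bi i := by
      intro i j h
      obtain ⟨S, hS, hpos⟩ := Finset.exists_lt_of_sum_lt (s := Finset.univ.filter (fun S : Finset B => j ∈ S)) (f := fun _ => (0:ℝ)) (g := fun S => x i S) (by simpa [z] using h)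
      exact (hsupp i S hpos).1 (Finset.mem_filter.1 hS).2
    have hcross : ∀ i i', Disjoint (R i) (R' i') := fun i i' =>
      Finset.disjoint_of_subset_left (fun j hj => (hR i j hj).1)
        (Finset.disjoint_of_subset_right (fun j hj => (hR' i' j hj).1) hHL)
    refine ⟨fun i => R i ∪ R' i, ?_, ?_, ?_⟩
    · intro i j hj
      rcases Finset.mem_union.1 hj with hj | hj
      · exact hzB i j (hR i j hj).2
      · exact hzB i j (hR' i j hj).2
    · intro i i' hii
      rw [Finset.disjoint_union_left, Finset.disjoint_union_right, Finset.disjoint_union_right]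
      exact ⟨⟨hRd i i' hii, hcross i i'⟩, (hcross i' i).symm, hRd' i i' hii⟩
    · intro i
      rw [Finset.sum_union (hcross i i),
        Finset.sum_congr rfl (fun j hj => hHw j (hR i j hj).1),
        Finset.sum_congr rfl (fun j hj => hLw j (hR' i j hj).1)]
      simp only [Finset.sum_const, nsmul_eq_mul, hRc, hRc']
      have htot := hcovlow i Finset.univ w T hT.le (fun S hS => by
        simpa using (hsupp i S hS).2)
      rw [← Finset.sum_filter_add_sum_filter_not Finset.univ (fun j : B => w j = 1)] at htot
      rw [← hH, ← hL, Finset.sum_congr rfl (fun j hj => by rw [hHw j hj]),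
        Finset.sum_congr (s₁ := L) rfl (fun j hj => by rw [hLw j hj]),
        ← Finset.sum_mul, ← Finset.sum_mul] at htot
      have e1 := Nat.lt_floor_add_one (∑ j ∈ H, z i j)
      have e2 := Nat.lt_floor_add_one (∑ j ∈ L, z i j)
      have e3 := mul_lt_mul_of_pos_right e2 hε0
      linarith
end

section
/- Let A be a finite set of agents and B a finite set of items, and for each i ∈ A let B_i^1 ⊆ B (heavy items of interest to i) and B_i^ε ⊆ B (light items of interest to i) with B_i^1 ∩ B_i^ε = ∅ for the relevant item sets. Let k ≥ 1 be an integer and set r = ⌈k/3⌉. Suppose there are nonnegative reals x_{i,S}, indexed by agents i ∈ A and finite sets S ⊆ B, satisfying: (1) whenever x_{i,S} > 0, either S is a nonempty subset of B_i^1 or S ⊆ B_i^ε with |S| ≥ k; (2) Σ_S x_{i,S} ≥ 1 for every agent i ∈ A; (3) Σ_{(i,S) : j ∈ S} x_{i,S} ≤ 1 for every item j ∈ B. Then there exists a family (S_i)_{i∈A} of pairwise disjoint sets such that for every agent i ∈ A, either S_i consists of a single item of B_i^1, or S_i ⊆ B_i^ε with |S_i| = r. Equivalently, the hypergraph whose edges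 are the sets {i,j} for j ∈ B_i^1 with some heavy bundle mass, and the sets {i} ∪ S' for S' ⊆ S of size r with x_{i,S} > 0 light, has a perfect matching covering all agents. -/
open Finset

/-- edges -/
def HPM.E {A B : Type*} (B1 Bε : A → Finset B) (r : ℕ) (i : A) (e : Finset B) : Prop :=
  (∃ j ∈ B1 i, e = {j}) ∨ (e ⊆ Bε i ∧ e.card = r)

/-- matchings on a set of agents -/
def HPM.Mat {A B : Type*} (E : A → Finset B → Prop) (D : Finset A) (M : A → Finset B) : Prop :=
  (∀ b ∈ D, E b (M b)) ∧ ∀ b ∈ D, ∀ b' ∈ D, b ≠ b' → Disjoint (M b) (M b')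

open Classical in
theorem HPM.core {A B : Type*} [DecidableEq B]
    (E : A → Finset B → Prop) (w : Finset B → ℕ) (q : ℕ) (D : Finset A) (a₀ : A) (ha₀ : a₀ ∉ D)
    (hwu : ∀ S T, w (S ∪ T) ≤ w S + w T)
    (hstep : ∀ M, HPM.Mat E D M → ∀ a e, E a e → ∀ N : Finset A, N ⊆ D → N.Nonempty →
      (∀ b ∈ N, ¬ Disjoint (M b) e) → w (e ∪ N.biUnion M) ≤ q * N.card)
    (hfin : ∀ (C : Finset A) (T : Finset B), w T + q ≤ q * C.card →
      ∃ a ∈ C, ∃ e, E a e ∧ Disjoint e T)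
    (n : ℕ) : ∀ (C : Finset A) (T : Finset B) (P : (A → Finset B) → Prop),
      D.card + 1 ≤ C.card + n →
      C ⊆ insert a₀ D → a₀ ∈ C → w T + q ≤ q * C.card → (∃ M, P M) →
      (∀ M, P M → HPM.Mat E D M) →
      (∀ M, P M → ∀ a ∈ C, ∀ e, E a e → Disjoint e T → ∃ b ∈ D, ¬ Disjoint (M b) e) →
      (∀ M, P M → ∀ b ∈ D, b ∈ C → M b ⊆ T) →
      (∀ M, P M → ∀ b ∈ D, b ∉ C → ∀ e, E b e → Disjoint e T →
        (∀ b' ∈ D, b' ≠ b → Disjoint (M b') e) → P (Function.update M b e)) → False := by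
  induction n with
  | zero =>
    intro C T P hn hC haC hw ⟨M, hM⟩ hmat hII hIII hV
    obtain ⟨a, ha, e, he, heT⟩ := hfin C T hw
    obtain ⟨b, hb, hbe⟩ := hII M hM a ha e he heT
    have : C = insert a₀ D := Finset.eq_of_subset_of_card_le hC (by
      rw [Finset.card_insert_of_notMem ha₀]; omega)
    apply hbe
    have h1 := hIII M hM b hb (by rw [this]; exact Finset.mem_insert_of_mem hb)
    exact (heT.mono_right h1).symm
  | succ n ih =>
    intro C T P hn hC haC hw hex hmat hII hIII hV
    obtain ⟨a, ha, e, he, heT⟩ := hfin C T hw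
    let N : (A → Finset B) → Finset A := fun M => D.filter (fun b => ¬ Disjoint (M b) e)
    have hmin : ∃ M, P M ∧ ∀ M', P M' → (N M).card ≤ (N M').card := by
      have hex' : ∃ m, ∃ M, P M ∧ (N M).card = m := by
        obtain ⟨M, hM⟩ := hex; exact ⟨_, M, hM, rfl⟩
      obtain ⟨M, hM, hc⟩ := Nat.find_spec hex'
      exact ⟨M, hM, fun M' hM' => hc ▸ Nat.find_min' hex' ⟨M', hM', rfl⟩⟩
    obtain ⟨Ms, hMs, hmn⟩ := hmin
    have hNne : (N Ms).Nonempty := by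
      obtain ⟨b, hb, hbe⟩ := hII Ms hMs a ha e he heT
      exact ⟨b, Finset.mem_filter.2 ⟨hb, hbe⟩⟩
    have hND : N Ms ⊆ D := Finset.filter_subset _ _
    have hNd : ∀ b ∈ N Ms, ¬ Disjoint (Ms b) e := fun b hb => (Finset.mem_filter.1 hb).2
    have hNC : Disjoint C (N Ms) := by
      rw [Finset.disjoint_left]
      intro b hbC hbN
      exact hNd b hbN ((heT.mono_right (hIII Ms hMs b (hND hbN) hbC)).symm)
    have hcard : (C ∪ N Ms).card = C.card + (N Ms).card := Finset.card_union_of_disjoint hNC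
    have hpos := hNne.card_pos
    refine ih (C ∪ N Ms) (T ∪ (e ∪ (N Ms).biUnion Ms))
      (fun M => P M ∧ (∀ b ∈ N Ms, M b = Ms b) ∧ N M = N Ms) (by omega)
      (Finset.union_subset hC (hND.trans (Finset.subset_insert _ _)))
      (Finset.mem_union_left _ haC) ?_ ⟨Ms, hMs, fun _ _ => rfl, rfl⟩ (fun M hM => hmat M hM.1)
      ?_ ?_ ?_
    · rw [hcard, mul_add]
      have h1 := hwu T (e ∪ (N Ms).biUnion Ms)
      have h2 := hstep Ms (hmat Ms hMs) a e he (N Ms) hND hNne hNd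
      omega
    · rintro M ⟨hM, hag, hN⟩ a' ha' e' he' heT'
      rw [Finset.disjoint_union_right, Finset.disjoint_union_right] at heT'
      obtain ⟨h1, h2, h3⟩ := heT'
      rcases Finset.mem_union.1 ha' with h | h
      · exact hII M hM a' h e' he' h1
      · by_contra hcon
        push Not at hcon
        have hup := hV M hM a' (hND h) (fun hc => Finset.disjoint_left.1 hNC hc h) e' he' h1
          (fun b' hb' _ => hcon b' hb')
        have hle := hmn _ hup
        have hsub : N (Function.update M a' e') ⊆ (N Ms).erase a' := by
          intro b hb
          obtain ⟨hbD, hbe⟩ := Finset.mem_filter.1 hb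
          by_cases hba : b = a'
          · subst hba
            simp only [Function.update_self] at hbe
            exact absurd h2 hbe
          · rw [Function.update_of_ne hba] at hbe
            rw [← hN]
            exact Finset.mem_erase.2 ⟨hba, Finset.mem_filter.2 ⟨hbD, hbe⟩⟩
        have := Finset.card_le_card hsub
        rw [Finset.card_erase_of_mem h] at this
        omega
    · rintro M ⟨hM, hag, hN⟩ b hb hbC
      rcases Finset.mem_union.1 hbC with h | h
      · exact (hIII M hM b hb h).trans Finset.subset_union_left
      · rw [hag b h]
        exact (Finset.subset_biUnion_of_mem Ms h).trans
          (Finset.subset_union_right.trans Finset.subset_union_right)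
    · rintro M ⟨hM, hag, hN⟩ b hb hbC e' he' heT' hdis
      rw [Finset.disjoint_union_right, Finset.disjoint_union_right] at heT'
      obtain ⟨h1, h2, h3⟩ := heT'
      rw [Finset.mem_union, not_or] at hbC
      refine ⟨hV M hM b hb hbC.1 e' he' h1 hdis, ?_, ?_⟩
      · intro b' hb'
        rw [Function.update_of_ne (by rintro rfl; exact hbC.2 hb')]
        exact hag b' hb'
      · rw [← hN]
        ext c
        by_cases hcb : c = b
        · subst hcb
          have : c ∉ N M := hN ▸ hbC.2
          simp only [this, iff_false]
          intro hc
          have := (Finset.mem_filter.1 hc).2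
          simp only [Function.update_self] at this
          exact this h2
        · simp only [N, Finset.mem_filter, Function.update_of_ne hcb]

open Classical in
theorem HPM.extend {A B : Type*} [DecidableEq B]
    (E : A → Finset B → Prop) (w : Finset B → ℕ) (q : ℕ) (D : Finset A) (a₀ : A) (ha₀ : a₀ ∉ D)
    (hwu : ∀ S T, w (S ∪ T) ≤ w S + w T) (hw0 : w ∅ = 0)
    (hstep : ∀ M, HPM.Mat E D M → ∀ a e, E a e → ∀ N : Finset A, N ⊆ D → N.Nonempty →
      (∀ b ∈ N, ¬ Disjoint (M b) e) → w (e ∪ N.biUnion M) ≤ q * N.card)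
    (hfin : ∀ (C : Finset A) (T : Finset B), w T + q ≤ q * C.card →
      ∃ a ∈ C, ∃ e, E a e ∧ Disjoint e T)
    (hD : ∃ M, HPM.Mat E D M) : ∃ M, HPM.Mat E (insert a₀ D) M := by
  by_contra hno
  have hupd : ∀ (M : A → Finset B) (D' : Finset A) (b : A) (e : Finset B), HPM.Mat E D M → E b e →
      D' ⊆ insert b D →
      (∀ b' ∈ D, b' ≠ b → Disjoint (M b') e) → HPM.Mat E D' (Function.update M b e) := by
    intro M D' b e hM he hD' hd
    have hin : ∀ c ∈ D', c ≠ b → c ∈ D := fun c hc hcb =>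
      (Finset.mem_insert.1 (hD' hc)).resolve_left hcb
    refine ⟨?_, ?_⟩
    · intro c hc
      by_cases hcb : c = b
      · subst hcb; simpa using he
      · rw [Function.update_of_ne hcb]; exact hM.1 c (hin c hc hcb)
    · intro c hc c' hc' hne
      by_cases hcb : c = b
      · subst hcb
        rw [Function.update_self, Function.update_of_ne hne.symm]
        exact (hd c' (hin c' hc' hne.symm) hne.symm).symm
      · by_cases hcb' : c' = b
        · subst hcb'
          rw [Function.update_self, Function.update_of_ne hne]
          exact hd c (hin c hc hne) hne
        · rw [Function.update_of_ne hcb, Function.update_of_ne hcb']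
          exact hM.2 c (hin c hc hcb) c' (hin c' hc' hcb') hne
  refine HPM.core E w q D a₀ ha₀ hwu hstep hfin D.card {a₀} ∅ (HPM.Mat E D) (by simp [add_comm])
    (by simp) (by simp) (by simp [hw0]) hD (fun _ h => h) ?_ ?_ ?_
  · intro M hM a ha e he _
    rw [Finset.mem_singleton] at ha
    subst ha
    by_contra hcon
    push Not at hcon
    exact hno ⟨_, hupd M _ a e hM he (Finset.Subset.refl _) (fun b' hb' _ => hcon b' hb')⟩
  · intro M hM b hb hba
    rw [Finset.mem_singleton] at hba
    exact absurd (hba ▸ hb) ha₀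
  · intro M hM b hb _ e he _ hd
    exact hupd M D b e hM he (Finset.subset_insert _ _) hd



/-- **Perfect matching in the bundle hypergraph.**
Items are partitioned into heavy and light (via the predicate `heavy`).  Given a
fractional bundle assignment `x` whose support consists of nonempty heavy bundles
or light bundles of size at least `k`, satisfying the covering and packing
constraints, there is a system of pairwise disjoint bundles giving every agent
either a single heavy item of `B1 i` or `r = ⌈k/3⌉` light items of `Bε i`. -/
theorem hypergraph_perfect_matching
    {A B : Type*} [Fintype A] [Fintype B] [DecidableEq B]
    (heavy : B → Bool)
    (B1 Bε : A → Finset B)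
    (hB1 : ∀ i, ∀ j ∈ B1 i, heavy j = true)
    (hBε : ∀ i, ∀ j ∈ Bε i, heavy j = false)
    (k r : ℕ) (hk : 1 ≤ k) (hr : r = ⌈(k : ℝ) / 3⌉₊)
    (x : A → Finset B → ℝ)
    (hx0 : ∀ i S, 0 ≤ x i S)
    (hsupp : ∀ i S, 0 < x i S →
      (S ⊆ B1 i ∧ S.Nonempty) ∨ (S ⊆ Bε i ∧ k ≤ S.card))
    (hcov : ∀ i, 1 ≤ ∑ S : Finset B, x i S)
    (hpack : ∀ j : B,
      ∑ i : A, ∑ S ∈ Finset.univ.filter (fun S : Finset B => j ∈ S), x i S ≤ 1) :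
    ∃ S : A → Finset B,
      (∀ i i', i ≠ i' → Disjoint (S i) (S i')) ∧
      (∀ i, (∃ j ∈ B1 i, S i = {j}) ∨ (S i ⊆ Bε i ∧ (S i).card = r)) := by

  classical
  have hr1 : 1 ≤ r := by
    rw [hr]; exact Nat.ceil_pos.2 (by positivity)
  have hkr : 3 * r ≤ k + 2 := by
    have : (r : ℝ) < (k : ℝ) / 3 + 1 := by
      rw [hr]; exact Nat.ceil_lt_add_one (by positivity)
    have : (3 * r : ℝ) < k + 3 := by linarith
    have : 3 * r < k + 3 := by exact_mod_cast this
    omega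
  obtain ⟨q, hq⟩ : ∃ q, q + 1 = 2 * r := ⟨2 * r - 1, by omega⟩
  let v : B → ℕ := fun j => if heavy j = true then q else 1
  let w : Finset B → ℕ := fun T => ∑ j ∈ T, v j
  have hlight : ∀ T : Finset B, (∀ j ∈ T, heavy j = false) → w T = T.card := by
    intro T hT
    rw [Finset.card_eq_sum_ones]
    exact Finset.sum_congr rfl (fun j hj => by simp [v, hT j hj])
  have key : ∀ D : Finset A, ∃ M, HPM.Mat (HPM.E B1 Bε r) D M := by
    intro D
    induction D using Finset.induction_on with
    | empty => exact ⟨fun _ => ∅, by simp [HPM.Mat]⟩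
    | insert a₀ D ha₀ ihD =>
      refine HPM.extend (HPM.E B1 Bε r) w q D a₀ ha₀ ?_ (by simp [w]) ?_ ?_ ihD
      · intro S T
        have := Finset.sum_union_inter (s₁ := S) (s₂ := T) (f := v)
        simp only [w]; omega
      · intro M hM a e he N hND hNne hNd
        have hpos := hNne.card_pos
        rcases he with ⟨j, hj, rfl⟩ | ⟨heB, hec⟩
        · have hjh := hB1 a j hj
          have hsub : ({j} ∪ N.biUnion M : Finset B) ⊆ {j} := by
            refine Finset.union_subset (Finset.Subset.refl _) (Finset.biUnion_subset.2 ?_)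
            intro b hb
            have hjb : j ∈ M b := by simpa using hNd b hb
            rcases hM.1 b (hND hb) with ⟨j', _, h⟩ | ⟨h, _⟩
            · rw [h] at hjb ⊢
              rw [Finset.mem_singleton.1 hjb]
            · have := hBε b j (h hjb)
              simp [this] at hjh
          calc w ({j} ∪ N.biUnion M) ≤ w {j} := Finset.sum_le_sum_of_subset hsub
            _ = q := by simp [w, v, hjh]
            _ ≤ q * N.card := Nat.le_mul_of_pos_right q hpos
        · have hMl : ∀ b ∈ N, M b ⊆ Bε b ∧ (M b).card = r := by
            intro b hb
            rcases hM.1 b (hND hb) with ⟨j', hj', h⟩ | h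
            · exfalso
              apply hNd b hb
              rw [h, Finset.disjoint_singleton_left]
              intro hje
              have h1 := hB1 b j' hj'
              have h2 := hBε a j' (heB hje)
              simp [h1] at h2
            · exact h
          rw [hlight]
          · have hU : (N.biUnion M).card ≤ N.card * r :=
              Finset.card_biUnion_le_card_mul _ _ _ (fun b hb => (hMl b hb).2.le)
            have h1 : (e \ N.biUnion M).card + 1 ≤ r := by
              rw [← hec]
              apply Finset.card_lt_card
              refine Finset.ssubset_iff_subset_ne.2 ⟨Finset.sdiff_subset, fun heq => ?_⟩
              obtain ⟨b, hb⟩ := hNne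
              apply hNd b hb
              have := Finset.sdiff_eq_self_iff_disjoint.1 heq
              exact (this.mono_right (Finset.subset_biUnion_of_mem M hb)).symm
            have h2 : (e ∪ N.biUnion M).card = (e \ N.biUnion M).card + (N.biUnion M).card := by
              rw [← Finset.sdiff_union_self_eq_union]
              exact Finset.card_union_of_disjoint Finset.sdiff_disjoint
            obtain ⟨s, rfl⟩ : ∃ s, r = s + 1 := ⟨r - 1, by omega⟩
            obtain rfl : q = 2 * s + 1 := by omega
            rw [h2]
            nlinarith
          · intro j hj
            rcases Finset.mem_union.1 hj with h | h
            · exact hBε a j (heB h)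
            · obtain ⟨b, hb, hjb⟩ := Finset.mem_biUnion.1 h
              exact hBε b j ((hMl b hb).1 hjb)
      · intro C T hw
        by_contra hcon
        push Not at hcon
        -- every supported bundle of C has weight at least q inside T
        have hS : ∀ a ∈ C, ∀ S, 0 < x a S → q ≤ w (S ∩ T) := by
          intro a ha S hxS
          rcases hsupp a S hxS with ⟨hSB, j, hj⟩ | ⟨hSB, hSk⟩
          · have hjT : j ∈ T := by
              have := hcon a ha {j} (Or.inl ⟨j, hSB hj, rfl⟩)
              simpa using this
            calc q = v j := by simp [v, hB1 a j (hSB hj)]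
              _ ≤ w (S ∩ T) := Finset.single_le_sum (f := v) (fun _ _ => Nat.zero_le _)
                  (Finset.mem_inter.2 ⟨hj, hjT⟩)
          · rw [hlight _ (fun j hj => hBε a j (hSB (Finset.mem_inter.1 hj).1))]
            have h1 : (S \ T).card < r := by
              by_contra hge
              push Not at hge
              obtain ⟨e, heS, hec⟩ := Finset.exists_subset_card_eq hge
              exact hcon a ha e (Or.inr ⟨heS.trans (Finset.sdiff_subset.trans hSB), hec⟩)
                (Finset.disjoint_of_subset_left heS Finset.sdiff_disjoint)
            have h2 := Finset.card_sdiff_add_card_inter S T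
            omega
        have hlow : (q : ℝ) * C.card ≤ ∑ a ∈ C, ∑ S : Finset B, x a S * (w (S ∩ T) : ℝ) := by
          calc (q : ℝ) * C.card = ∑ a ∈ C, (q : ℝ) := by simp [mul_comm]
            _ ≤ _ := Finset.sum_le_sum (fun a ha => ?_)
          calc (q : ℝ) ≤ (∑ S : Finset B, x a S) * q :=
                le_mul_of_one_le_left (Nat.cast_nonneg q) (hcov a)
            _ = ∑ S : Finset B, x a S * q := Finset.sum_mul _ _ _
            _ ≤ _ := Finset.sum_le_sum (fun S _ => ?_)
          rcases (hx0 a S).eq_or_lt with h | h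
          · rw [← h]; simp
          · exact mul_le_mul_of_nonneg_left (by exact_mod_cast hS a ha S h) h.le
        have heq : ∀ a, ∑ S : Finset B, x a S * (w (S ∩ T) : ℝ) =
            ∑ j ∈ T, (v j : ℝ) * ∑ S ∈ Finset.univ.filter (fun S : Finset B => j ∈ S), x a S := by
          intro a
          have : ∀ S : Finset B, x a S * (w (S ∩ T) : ℝ) =
              ∑ j ∈ T, if j ∈ S then (v j : ℝ) * x a S else 0 := by
            intro S
            rw [← Finset.sum_filter, Finset.inter_comm, ← Finset.filter_mem_eq_inter]
            simp only [w]
            push_cast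
            rw [Finset.mul_sum]
            exact Finset.sum_congr rfl (fun j _ => mul_comm _ _)
          simp only [this]
          rw [Finset.sum_comm]
          refine Finset.sum_congr rfl (fun j _ => ?_)
          rw [Finset.mul_sum, Finset.sum_filter]
        have hup : ∑ a ∈ C, ∑ S : Finset B, x a S * (w (S ∩ T) : ℝ) ≤ (w T : ℝ) := by
          calc _ ≤ ∑ a : A, ∑ S : Finset B, x a S * (w (S ∩ T) : ℝ) :=
                Finset.sum_le_univ_sum_of_nonneg (fun a => Finset.sum_nonneg
                  (fun S _ => mul_nonneg (hx0 a S) (Nat.cast_nonneg _)))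
            _ = ∑ j ∈ T, (v j : ℝ) * ∑ a : A,
                  ∑ S ∈ Finset.univ.filter (fun S : Finset B => j ∈ S), x a S := by
                simp only [heq]
                rw [Finset.sum_comm]
                exact Finset.sum_congr rfl (fun j _ => (Finset.mul_sum _ _ _).symm)
            _ ≤ ∑ j ∈ T, (v j : ℝ) := Finset.sum_le_sum (fun j _ =>
                mul_le_of_le_one_right (Nat.cast_nonneg _) (hpack j))
            _ = (w T : ℝ) := by simp only [w]; push_cast; rfl
        have h3 : q * C.card ≤ w T := by exact_mod_cast hlow.trans hup
        omega
  obtain ⟨M, hM⟩ := key Finset.univ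
  exact ⟨M, fun i i' h => hM.2 i (Finset.mem_univ _) i' (Finset.mem_univ _) h,
    fun i => hM.1 i (Finset.mem_univ _)⟩
end
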